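/- Pointwise injectivity of 𝓗_{4n−1} for the canonical form (Part 1 of the proof of Proposition 4). Let θ = (θ_a, θ_b) and θ* = (θ_a*, θ_b*) in R^n × R^n, x, x* ∈ R^n, and v = (v_0, …, v_{4n−2}) ∈ R^{4n−1}. Assume the 2n×2n Hankel matrix 𝔐_{2n−1}(v) is invertible and the 2n×2n Sylvester matrix M(θ_a, θ_b) is invertible. If 𝓗_{4n−1}(x, θ, v) = 𝓗_{4n−1}(x*, θ*, v), then θ = θ* and x = x*. -/

import Mathlib

open scoped Matrix BigOperators

/-- The first basis row vector `e₁ᵀ = (1, 0, …, 0)`. -/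
def e1 (n : ℕ) : Fin n → ℝ := fun j => if (j : ℕ) = 0 then 1 else 0

/-- Canonical SISO form : `A(θ_a)` has first column `−θ_a` and entries `(i, i+1)` equal
to `1`, all other entries `0`. -/
def Acan (n : ℕ) (θa : Fin n → ℝ) : Matrix (Fin n) (Fin n) ℝ :=
  fun i j => if (j : ℕ) = 0 then -θa i else if (j : ℕ) = (i : ℕ) + 1 then 1 else 0

/-- `H_r(θ)` : the `r × n` matrix stacking the rows `C A(θ_a)^{j-1}`, `j = 1,…,r`. -/
def Hcan (n r : ℕ) (θa : Fin n → ℝ) : Matrix (Fin r) (Fin n) ℝ :=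
  fun j => Matrix.vecMul (e1 n) (Acan n θa ^ (j : ℕ))

/-- The down-shift matrix `S ∈ ℝ^{r×r}`. -/
def shiftMat (r : ℕ) : Matrix (Fin r) (Fin r) ℝ :=
  fun i j => if (i : ℕ) = (j : ℕ) + 1 then 1 else 0

/-- `𝓗_r(x, θ, v) = H_r(θ) x + Σ_{j=1}^{r−1} S^j H_r(θ) B(θ_b) v_{j−1}` for the
canonical form. -/
def HHcan (n r : ℕ) (x θa θb : Fin n → ℝ) (v : Fin (r - 1) → ℝ) : Fin r → ℝ :=
  Hcan n r θa *ᵥ x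
    + ∑ j : Fin (r - 1), v j • ((shiftMat r ^ ((j : ℕ) + 1)) *ᵥ (Hcan n r θa *ᵥ θb))

/-- The `a × a` Hankel matrix of a vector `v ∈ ℝ^b` : entry `(i,j)` is `v_{i+j}`. -/
def hankelOf (a b : ℕ) (v : Fin b → ℝ) : Matrix (Fin a) (Fin a) ℝ :=
  fun i j => if h : (i : ℕ) + (j : ℕ) < b then v ⟨(i : ℕ) + (j : ℕ), h⟩ else 0

/-- The column `(θ_{bn}, θ_{b(n−1)}, …, θ_{b1}, 0, …, 0)ᵀ ∈ ℝ^{2n}`. -/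
def colB (n : ℕ) (θb : Fin n → ℝ) : Fin (2 * n) → ℝ :=
  fun i => if h : (i : ℕ) < n then θb ⟨n - 1 - (i : ℕ), by omega⟩ else 0

/-- The column `(θ_{an}, θ_{a(n−1)}, …, θ_{a1}, 1, 0, …, 0)ᵀ ∈ ℝ^{2n}`. -/
def colA (n : ℕ) (θa : Fin n → ℝ) : Fin (2 * n) → ℝ :=
  fun i => if h : (i : ℕ) < n then θa ⟨n - 1 - (i : ℕ), by omega⟩
    else if (i : ℕ) = n then 1 else 0

/-- The `2n × 2n` Sylvester (resultant) matrix : its first `n` columns are the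
successive downward shifts of `colB` and its last `n` columns are the successive
downward shifts of `colA`. -/
def sylvesterMat (n : ℕ) (θa θb : Fin n → ℝ) : Matrix (Fin (2 * n)) (Fin (2 * n)) ℝ :=
  fun i j =>
    if (j : ℕ) < n then
      (if h : (j : ℕ) ≤ (i : ℕ) then colB n θb ⟨(i : ℕ) - (j : ℕ), by have := i.2; omega⟩
        else 0)
    else
      (if h : (j : ℕ) - n ≤ (i : ℕ) then
        colA n θa ⟨(i : ℕ) - ((j : ℕ) - n), by have := i.2; omega⟩ else 0)

/-!
Let `σ` be the forward shift on sequences. Eliminating the state from the canonical form leaves the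
difference equation `a(σ) y = b(σ) v` between input and output, where `a = X ^ n + ⋯` and `b` have
coefficients `θa` and `θb`. If the parameters `a', b'` explain the same output, then
`a'(σ) a(σ) y` can be computed in two ways, so `(a' b - a b')(σ) v` vanishes at `2n` consecutive
times. As `a' b - a b'` has degree less than `2n`, this says that its coefficient vector lies in
the kernel of the Hankel matrix, so `a' b = a b'`. Nonsingularity of the Sylvester matrix makes `a`
and `b` coprime, so the monic polynomial `a` divides `a'`, which has the same degree, and the
parameters agree. The initial states then agree because the canonical form is observable.
-/

open Polynomial

section DegreeBounds

variable {R : Type*}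

lemma degree_mul_lt_of_natDegree_le [Semiring R] {p q : R[X]} {m n : ℕ} (hp : p.natDegree ≤ m)
    (hq : q.degree < n) : (p * q).degree < (m + n : ℕ) := by
  rw [Nat.cast_add]
  exact (degree_mul_le_of_le (degree_le_of_natDegree_le hp) le_rfl).trans_lt <|
    WithBot.add_lt_add_left WithBot.coe_ne_bot hq

lemma degree_mul_sub_mul_lt [Ring R] {a a' b b' : R[X]} {m n : ℕ} (ha : a.natDegree ≤ m)
    (ha' : a'.natDegree ≤ m) (hb : b.degree < n) (hb' : b'.degree < n) :
    (a' * b - a * b').degree < (m + n : ℕ) :=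
  (degree_sub_le _ _).trans_lt <|
    max_lt (degree_mul_lt_of_natDegree_le ha' hb) (degree_mul_lt_of_natDegree_le ha hb')

end DegreeBounds

section ForwardShift

variable {R : Type*} [CommSemiring R] {p : R[X]} {f g : ℕ → R} {k n N : ℕ}

/-- The operator `σ` on sequences, `(σ f) k = f (k + 1)`. A polynomial `p` acts on sequences as
the difference operator `aeval (forwardShift R) p`, written `p(σ)` in comments. -/
def forwardShift (R : Type*) [CommSemiring R] : Module.End R (ℕ → R) :=
  LinearMap.funLeft R R Nat.succ

lemma forwardShift_pow_apply (m : ℕ) (f : ℕ → R) (k : ℕ) :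
    (forwardShift R ^ m) f k = f (k + m) := by
  induction m generalizing k with
  | zero => simp
  | succ m ih =>
    rw [pow_succ', Module.End.mul_apply]
    exact (ih (k + 1)).trans (congrArg f (by omega))

lemma aeval_forwardShift_apply (hp : p.degree < N) (f : ℕ → R) (k : ℕ) :
    aeval (forwardShift R) p f k = ∑ i : Fin N, p.coeff i * f (k + i) := by
  rw [aeval_def, eval₂_eq_sum, ← sum_fin _ (by simp) hp, LinearMap.sum_apply, Finset.sum_apply]
  simp [Module.algebraMap_end_apply, forwardShift_pow_apply]

lemma aeval_forwardShift_congr (hp : p.natDegree ≤ n) (h : ∀ i ≤ n, f (k + i) = g (k + i)) :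
    aeval (forwardShift R) p f k = aeval (forwardShift R) p g k := by
  have hdeg : p.degree < (n + 1 : ℕ) :=
    (degree_le_of_natDegree_le hp).trans_lt (by exact_mod_cast n.lt_succ_self)
  rw [aeval_forwardShift_apply hdeg, aeval_forwardShift_apply hdeg]
  exact Finset.sum_congr rfl fun i _ ↦ by rw [h i (by omega)]

/-- Persistence of excitation of order `N`, i.e. injectivity of the `N × N` Hankel matrix of `u`,
phrased through the action of polynomials: no nonzero `p` of degree `< N` satisfies
`p(σ) u = 0` on the window `[0, N)`. -/
def IsPersistentlyExciting (u : ℕ → R) (N : ℕ) : Prop :=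
  ∀ p : R[X], p.degree < N → (∀ k < N, aeval (forwardShift R) p u k = 0) → p = 0

lemma aeval_forwardShift_mul_sub_mul_eq_zero {R : Type*} [CommRing R] {a a' b b' : R[X]}
    {u y : ℕ → R} {k n N : ℕ} (ha : a.natDegree ≤ n) (ha' : a'.natDegree ≤ n)
    (h : ∀ k < N + n, aeval (forwardShift R) a y k = aeval (forwardShift R) b u k)
    (h' : ∀ k < N + n, aeval (forwardShift R) a' y k = aeval (forwardShift R) b' u k)
    (hk : k < N) : aeval (forwardShift R) (a' * b - a * b') u k = 0 := by
  have hcross : aeval (forwardShift R) (a' * b) u k = aeval (forwardShift R) (a * b') u k :=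
    calc aeval (forwardShift R) (a' * b) u k
      _ = aeval (forwardShift R) (a' * a) y k := by
        simp only [aeval_mul, Module.End.mul_apply]
        exact aeval_forwardShift_congr ha' fun i hi ↦ (h _ (by omega)).symm
      _ = aeval (forwardShift R) (a * b') u k := by
        simp only [mul_comm a' a, aeval_mul, Module.End.mul_apply]
        exact aeval_forwardShift_congr ha fun i hi ↦ h' _ (by omega)
  rw [map_sub, LinearMap.sub_apply, Pi.sub_apply, hcross, sub_self]

end ForwardShift

section HornerPoly

variable {R : Type*}

/-- The polynomial `θ₀ X^(m-1) + θ₁ X^(m-2) + ⋯ + θ_(m-1)`, built by Horner's scheme. The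
transfer function of the canonical form is `hornerPoly θb n / (X ^ n + hornerPoly θa n)`. -/
noncomputable def hornerPoly [Semiring R] (θ : ℕ → R) : ℕ → R[X]
  | 0 => 0
  | m + 1 => X * hornerPoly θ m + C (θ m)

lemma coeff_hornerPoly [Semiring R] (θ : ℕ → R) (m i : ℕ) :
    (hornerPoly θ m).coeff i = if i < m then θ (m - 1 - i) else 0 := by
  induction m generalizing i with
  | zero => simp [hornerPoly]
  | succ m ih =>
    cases i with
    | zero => simp [hornerPoly]
    | succ i => simp [hornerPoly, ih, Nat.sub_sub, add_comm]

lemma degree_hornerPoly_lt [Semiring R] (θ : ℕ → R) (m : ℕ) : (hornerPoly θ m).degree < m :=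
  (degree_lt_iff_coeff_zero _ _).2 fun i hi ↦ by simp [coeff_hornerPoly, hi]

lemma monic_X_pow_add_hornerPoly [Semiring R] (θ : ℕ → R) (m : ℕ) :
    (X ^ m + hornerPoly θ m).Monic :=
  monic_X_pow_add (degree_hornerPoly_lt θ m)

lemma natDegree_X_pow_add_hornerPoly [Semiring R] [Nontrivial R] (θ : ℕ → R) (m : ℕ) :
    (X ^ m + hornerPoly θ m).natDegree = m := by
  have hdeg : (hornerPoly θ m).degree < (X ^ m : R[X]).degree := by
    simpa only [degree_X_pow] using degree_hornerPoly_lt θ m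
  rw [natDegree_add_eq_left_of_degree_lt hdeg, natDegree_X_pow]

lemma eq_of_hornerPoly_eq [Semiring R] {θ θ' : ℕ → R} {m i : ℕ}
    (h : hornerPoly θ m = hornerPoly θ' m) (hi : i < m) : θ i = θ' i := by
  have hcoeff := congrArg (coeff · (m - 1 - i)) h
  have hlt : m - 1 - i < m := by omega
  have hrev : m - 1 - (m - 1 - i) = i := by omega
  simpa only [coeff_hornerPoly, hlt, if_true, hrev] using hcoeff

end HornerPoly

section Resultant

variable {R : Type*}

lemma sylvester_apply [Semiring R] {f g : R[X]} {m n : ℕ} (hf : f.natDegree ≤ m)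
    (hg : g.natDegree ≤ n) (i j : Fin (m + n)) :
    sylvester f g m n i j =
      if (j : ℕ) < m then (if (j : ℕ) ≤ i then g.coeff (i - j) else 0)
      else (if (j : ℕ) - m ≤ i then f.coeff (i - (j - m)) else 0) := by
  have hcoeff {p : R[X]} {d : ℕ} (hp : p.natDegree ≤ d) (k l : ℕ) :
      (if k ∈ Set.Icc l (l + d) then p.coeff (k - l) else 0)
        = if l ≤ k then p.coeff (k - l) else 0 := by
    simp only [Set.mem_Icc, ite_and]
    refine if_congr Iff.rfl (ite_eq_left_iff.2 fun hk ↦ ?_) rfl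
    exact (coeff_eq_zero_of_natDegree_lt (by omega)).symm
  induction j using Fin.addCases <;> simp [sylvester, hcoeff hf, hcoeff hg, -Set.mem_Icc]

lemma isCoprime_of_isUnit_resultant [CommRing R] {f g : R[X]} {m n : ℕ} (hf : f.natDegree ≤ m)
    (hg : g.natDegree ≤ n) (hmn : m ≠ 0 ∨ n ≠ 0) (h : IsUnit (f.resultant g m n)) :
    IsCoprime f g := by
  obtain ⟨p, q, -, -, hbezout⟩ := exists_mul_add_mul_eq_C_resultant f g hf hg hmn
  obtain ⟨c, hc⟩ := h.exists_left_inv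
  refine ⟨C c * p, C c * q, ?_⟩
  rw [← C_1, ← hc, C_mul, ← hbezout]
  ring

lemma eq_and_eq_of_monic_of_isCoprime [CommRing R] {a a' b b' : R[X]} (ha : a.Monic)
    (ha' : a'.Monic) (hdeg : a'.natDegree ≤ a.natDegree) (hab : IsCoprime a b)
    (h : a' * b = a * b') : a = a' ∧ b = b' := by
  have hdvd : a ∣ a' := hab.dvd_of_dvd_mul_right ⟨b', h⟩
  obtain rfl : a = a' := (eq_of_monic_of_dvd_of_natDegree_le ha ha' hdvd hdeg).symm
  exact ⟨rfl, ha.isRegular.left h⟩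

end Resultant

section ObserverForm

variable {R : Type*} [CommRing R] {n : ℕ} {a b a' b' u : ℕ → R} {s s' : ℕ → ℕ → R}

/-- `s k i` is the `i`-th state coordinate at time `k` of the canonical (observer) form of
order `n` with parameters `a, b` and input `u`; the output is coordinate `0`. Coordinates are
indexed by `ℕ` and the `n`-th one vanishes, so that no case distinction is needed at the last
row. -/
structure IsObserverTrajectory (n : ℕ) (a b u : ℕ → R) (s : ℕ → ℕ → R) : Prop where
  step : ∀ k, ∀ i < n, s (k + 1) i = s k (i + 1) - a i * s k 0 + b i * u k
  boundary : ∀ k, s k n = 0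

namespace IsObserverTrajectory

lemma coord_eq (hs : IsObserverTrajectory n a b u s) {m : ℕ} (hm : m ≤ n) (k : ℕ) :
    s k m = aeval (forwardShift R) (X ^ m + hornerPoly a m) (s · 0) k
      - aeval (forwardShift R) (hornerPoly b m) u k := by
  induction m generalizing k with
  | zero => simp [hornerPoly]
  | succ m ih =>
    have hstep := hs.step k m hm
    have hshift (p : R[X]) (c : R) (f : ℕ → R) :
        aeval (forwardShift R) (X * p + C c) f k
          = aeval (forwardShift R) p f (k + 1) + c * f k := by
      simp only [map_add, map_mul, aeval_X, aeval_C]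
      rfl
    rw [hornerPoly, hornerPoly, pow_succ', ← add_assoc, ← mul_add, hshift, hshift]
    linear_combination ih (by omega) (k + 1) - hstep

lemma aeval_output_eq_aeval_input (hs : IsObserverTrajectory n a b u s) (k : ℕ) :
    aeval (forwardShift R) (X ^ n + hornerPoly a n) (s · 0) k
      = aeval (forwardShift R) (hornerPoly b n) u k :=
  sub_eq_zero.1 <| (hs.coord_eq le_rfl k).symm.trans (hs.boundary k)

lemma initial_eq_of_output_eq (hs : IsObserverTrajectory n a b u s)
    (hs' : IsObserverTrajectory n a b u s') (hout : ∀ k < n, s k 0 = s' k 0) {i : ℕ}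
    (hi : i < n) : s 0 i = s' 0 i := by
  nontriviality R
  rw [hs.coord_eq hi.le, hs'.coord_eq hi.le,
    aeval_forwardShift_congr (f := (s · 0)) (g := (s' · 0))
      (natDegree_X_pow_add_hornerPoly a i).le fun j hj ↦ hout (0 + j) (by omega)]

lemma hornerPoly_eq_of_output_eq (hs : IsObserverTrajectory n a b u s)
    (hs' : IsObserverTrajectory n a' b' u s') (hu : IsPersistentlyExciting u (2 * n))
    (hab : IsCoprime (X ^ n + hornerPoly a n) (hornerPoly b n))
    (hout : ∀ k < 4 * n, s k 0 = s' k 0) :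
    hornerPoly a n = hornerPoly a' n ∧ hornerPoly b n = hornerPoly b' n := by
  nontriviality R
  have hdeg (c : ℕ → R) := natDegree_X_pow_add_hornerPoly c n
  have hio' : ∀ k < 2 * n + n, aeval (forwardShift R) (X ^ n + hornerPoly a' n) (s · 0) k
      = aeval (forwardShift R) (hornerPoly b' n) u k := fun k hk ↦
    (aeval_forwardShift_congr (hdeg a').le fun i hi ↦ hout (k + i) (by omega)).trans
      (hs'.aeval_output_eq_aeval_input k)
  have hcross_deg := degree_mul_sub_mul_lt (hdeg a).le (hdeg a').le
    (degree_hornerPoly_lt b n) (degree_hornerPoly_lt b' n)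
  have hcross := hu _ (two_mul n ▸ hcross_deg) fun k hk ↦
    aeval_forwardShift_mul_sub_mul_eq_zero (hdeg a).le (hdeg a').le
      (fun k _ ↦ hs.aeval_output_eq_aeval_input k) hio' hk
  obtain ⟨hden, hnum⟩ := eq_and_eq_of_monic_of_isCoprime (monic_X_pow_add_hornerPoly a n)
    (monic_X_pow_add_hornerPoly a' n) (by rw [hdeg, hdeg]) hab (sub_eq_zero.1 hcross)
  exact ⟨add_left_cancel hden, hnum⟩

end IsObserverTrajectory

end ObserverForm

section StateSeq

variable {R ι : Type*} [CommSemiring R] [Fintype ι]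

/-- The state sequence of `s (k + 1) = A s k + u k • b` started at `s 0 = x`. -/
def stateSeq (A : Matrix ι ι R) (b x : ι → R) (u : ℕ → R) : ℕ → ι → R
  | 0 => x
  | k + 1 => A *ᵥ stateSeq A b x u k + u k • b

lemma stateSeq_eq [DecidableEq ι] (A : Matrix ι ι R) (b x : ι → R) (u : ℕ → R) (k : ℕ) :
    stateSeq A b x u k
      = A ^ k *ᵥ x + ∑ j ∈ Finset.range k, u j • (A ^ (k - 1 - j) *ᵥ b) := by
  induction k with
  | zero => simp [stateSeq]
  | succ k ih =>
    have hstep : ∀ j ∈ Finset.range k,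
        A *ᵥ (u j • (A ^ (k - 1 - j) *ᵥ b)) = u j • (A ^ (k + 1 - 1 - j) *ᵥ b) := by
      intro j hj
      have hexp : k + 1 - 1 - j = k - 1 - j + 1 := by have := Finset.mem_range.1 hj; omega
      rw [Matrix.mulVec_smul, Matrix.mulVec_mulVec, ← pow_succ', hexp]
    rw [stateSeq, ih, Matrix.mulVec_add, Matrix.mulVec_mulVec, ← pow_succ', Matrix.mulVec_sum,
      Finset.sum_congr rfl hstep, Finset.sum_range_succ, add_assoc]
    simp

end StateSeq

section ZeroExtend

variable {R : Type*} {m : ℕ}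

/-- A finite vector as a sequence, continued by zeros. -/
noncomputable def zeroExtend [Zero R] (f : Fin m → R) : ℕ → R := Function.extend Fin.val f 0

lemma zeroExtend_val [Zero R] (f : Fin m → R) (i : Fin m) : zeroExtend f i = f i :=
  Fin.val_injective.extend_apply f 0 i

lemma zeroExtend_of_lt [Zero R] (f : Fin m → R) {i : ℕ} (hi : i < m) :
    zeroExtend f i = f ⟨i, hi⟩ :=
  zeroExtend_val f ⟨i, hi⟩

lemma zeroExtend_of_le [Zero R] (f : Fin m → R) {i : ℕ} (hi : m ≤ i) : zeroExtend f i = 0 :=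
  Function.extend_apply' _ _ _ fun ⟨j, hj⟩ ↦ (j.isLt.trans_le hi).ne hj

lemma sum_ite_val_eq [AddCommMonoid R] (f : Fin m → R) (i : ℕ) :
    ∑ j : Fin m, (if (j : ℕ) = i then f j else 0) = zeroExtend f i := by
  by_cases hi : i < m
  · rw [zeroExtend_of_lt f hi, Fintype.sum_eq_single ⟨i, hi⟩ fun j hj ↦
      if_neg (Fin.val_ne_of_ne hj)]
    exact if_pos rfl
  · rw [zeroExtend_of_le f (not_lt.1 hi)]
    exact Finset.sum_eq_zero fun j _ ↦ if_neg (by omega)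

lemma sum_ite_val_lt [AddCommMonoid R] (g : ℕ → R) {k : ℕ} (hk : k ≤ m) :
    ∑ j : Fin m, (if (j : ℕ) < k then g j else 0) = ∑ j ∈ Finset.range k, g j := by
  rw [Fin.sum_univ_eq_sum_range fun j ↦ if j < k then g j else 0, ← Finset.sum_filter]
  congr 1
  ext j
  simp only [Finset.mem_filter, Finset.mem_range]
  omega

lemma eq_of_hornerPoly_zeroExtend_eq [Semiring R] {θ θ' : Fin m → R}
    (h : hornerPoly (zeroExtend θ) m = hornerPoly (zeroExtend θ') m) : θ = θ' :=
  funext fun i ↦ by simpa only [zeroExtend_val] using eq_of_hornerPoly_eq h i.isLt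

end ZeroExtend

section CanonicalForm

lemma e1_dotProduct {n : ℕ} (s : Fin n → ℝ) : e1 n ⬝ᵥ s = zeroExtend s 0 := by
  simp only [← sum_ite_val_eq, dotProduct, e1, ite_mul, one_mul, zero_mul]

lemma Acan_mulVec {n : ℕ} (θ s : Fin n → ℝ) (i : Fin n) :
    (Acan n θ *ᵥ s) i = zeroExtend s (i + 1) - θ i * zeroExtend s 0 := by
  have hentry (j : Fin n) : Acan n θ i j * s j
      = (if (j : ℕ) = i + 1 then s j else 0) - θ i * (if (j : ℕ) = 0 then s j else 0) := by
    rw [Acan]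
    split_ifs <;> first | omega | ring
  rw [Matrix.mulVec, dotProduct, Finset.sum_congr rfl fun j _ ↦ hentry j, Finset.sum_sub_distrib,
    ← Finset.mul_sum, sum_ite_val_eq, sum_ite_val_eq]

lemma isObserverTrajectory_stateSeq {n : ℕ} (θa θb x : Fin n → ℝ) (u : ℕ → ℝ) :
    IsObserverTrajectory n (zeroExtend θa) (zeroExtend θb) u
      fun k ↦ zeroExtend (stateSeq (Acan n θa) θb x u k) where
  step k i hi := by
    simp only [zeroExtend_of_lt _ hi, stateSeq, Pi.add_apply, Acan_mulVec, Pi.smul_apply,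
      smul_eq_mul, mul_comm (u k)]
  boundary _ := zeroExtend_of_le _ le_rfl

lemma Hcan_mulVec {n r : ℕ} (θa x : Fin n → ℝ) :
    Hcan n r θa *ᵥ x = fun k : Fin r ↦ e1 n ⬝ᵥ (Acan n θa ^ (k : ℕ) *ᵥ x) :=
  funext fun _ ↦ (Matrix.dotProduct_mulVec _ _ _).symm

lemma shiftMat_mulVec {r : ℕ} (g : ℕ → ℝ) (k : Fin r) :
    (shiftMat r *ᵥ fun j ↦ g j) k = if 1 ≤ (k : ℕ) then g (k - 1) else 0 := by
  rcases hk : (k : ℕ) with _ | i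
  · simp [Matrix.mulVec, dotProduct, shiftMat, hk]
  · have hi : i < r := by omega
    simp [Matrix.mulVec, dotProduct, shiftMat, hk, eq_comm (a := i), sum_ite_val_eq,
      zeroExtend_of_lt _ hi]

lemma shiftMat_pow_mulVec {r : ℕ} (m : ℕ) (g : ℕ → ℝ) (k : Fin r) :
    (shiftMat r ^ m *ᵥ fun j ↦ g j) k = if m ≤ (k : ℕ) then g (k - m) else 0 := by
  induction m generalizing k with
  | zero => simp
  | succ m ih =>
    rw [pow_succ', ← Matrix.mulVec_mulVec, funext ih,
      shiftMat_mulVec fun j ↦ if m ≤ j then g (j - m) else 0, ← ite_and, Nat.sub_sub,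
      add_comm 1 m]
    exact if_congr (by omega) rfl rfl

lemma HHcan_apply {n r : ℕ} (x θa θb : Fin n → ℝ) (v : Fin (r - 1) → ℝ) (k : Fin r) :
    HHcan n r x θa θb v k = zeroExtend (stateSeq (Acan n θa) θb x (zeroExtend v) k) 0 := by
  have hsum (g : ℕ → ℝ) :
      ∑ j : Fin (r - 1), v j * (if (j : ℕ) + 1 ≤ k then g (k - (j + 1)) else 0)
        = ∑ j ∈ Finset.range k, zeroExtend v j * g (k - 1 - j) := by
    rw [← sum_ite_val_lt (m := r - 1) _ (by omega)]
    simp only [zeroExtend_val, mul_ite, mul_zero, Nat.succ_le_iff, Nat.sub_sub, add_comm 1]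
  rw [← e1_dotProduct, stateSeq_eq, dotProduct_add, dotProduct_sum]
  simp only [HHcan, Hcan_mulVec, Pi.add_apply, Finset.sum_apply, Pi.smul_apply, smul_eq_mul,
    shiftMat_pow_mulVec _ fun j ↦ e1 n ⬝ᵥ (Acan n θa ^ j *ᵥ θb), dotProduct_smul]
  rw [hsum fun j ↦ e1 n ⬝ᵥ (Acan n θa ^ j *ᵥ θb)]

lemma hankelOf_apply {N M : ℕ} (v : Fin M → ℝ) (i j : Fin N) :
    hankelOf N M v i j = zeroExtend v (i + j) := by
  rw [hankelOf]
  split_ifs with hij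
  · exact (zeroExtend_of_lt v hij).symm
  · exact (zeroExtend_of_le v (not_lt.1 hij)).symm

lemma isPersistentlyExciting_of_isUnit_det_hankelOf {N M : ℕ} {v : Fin M → ℝ}
    (h : IsUnit (hankelOf N M v).det) : IsPersistentlyExciting (zeroExtend v) N := by
  intro p hp hzero
  have hker : hankelOf N M v *ᵥ (fun i ↦ p.coeff i) = 0 := funext fun k ↦ by
    rw [Pi.zero_apply, ← hzero k k.isLt, aeval_forwardShift_apply hp]
    simp only [Matrix.mulVec, dotProduct, hankelOf_apply, mul_comm (p.coeff _)]
  have hcoeff := Matrix.eq_zero_of_mulVec_eq_zero h.ne_zero hker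
  ext i
  by_cases hi : i < N
  · exact congrFun hcoeff ⟨i, hi⟩
  · exact (degree_lt_iff_coeff_zero p N).1 hp i (not_lt.1 hi)

lemma colB_eq_coeff {n : ℕ} (θ : Fin n → ℝ) (i : Fin (2 * n)) :
    colB n θ i = (hornerPoly (zeroExtend θ) n).coeff i := by
  rw [coeff_hornerPoly, colB]
  split_ifs with hi
  · exact (zeroExtend_of_lt θ _).symm
  · rfl

lemma colA_eq_coeff {n : ℕ} (θ : Fin n → ℝ) (i : Fin (2 * n)) :
    colA n θ i = (X ^ n + hornerPoly (zeroExtend θ) n).coeff i := by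
  rw [coeff_add, ← colB_eq_coeff, coeff_X_pow, colA, colB]
  split_ifs <;> first | omega | simp

lemma sylvesterMat_eq_submatrix_sylvester {n : ℕ} (θa θb : Fin n → ℝ) :
    sylvesterMat n θa θb
      = (sylvester (X ^ n + hornerPoly (zeroExtend θa) n) (hornerPoly (zeroExtend θb) n) n
          n).submatrix (finCongr (two_mul n)) (finCongr (two_mul n)) := by
  ext i j
  rw [Matrix.submatrix_apply, sylvester_apply (natDegree_X_pow_add_hornerPoly _ n).le
    (natDegree_le_of_degree_le (degree_hornerPoly_lt _ n).le)]
  simp only [sylvesterMat, colA_eq_coeff, colB_eq_coeff, dite_eq_ite, finCongr_apply,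
    Fin.val_cast]

lemma isCoprime_of_isUnit_det_sylvesterMat {n : ℕ} (hn : n ≠ 0) {θa θb : Fin n → ℝ}
    (h : IsUnit (sylvesterMat n θa θb).det) :
    IsCoprime (X ^ n + hornerPoly (zeroExtend θa) n) (hornerPoly (zeroExtend θb) n) := by
  rw [sylvesterMat_eq_submatrix_sylvester, Matrix.det_submatrix_equiv_self] at h
  exact isCoprime_of_isUnit_resultant (natDegree_X_pow_add_hornerPoly _ n).le
    (natDegree_le_of_degree_le (degree_hornerPoly_lt _ n).le) (Or.inl hn) h

end CanonicalForm

/-- pointwise injectivity of `𝓗` for the canonical form ;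
Part 1 of the proof of Proposition 4. -/
theorem pointwise_injectivity_canonical
    (n : ℕ) (hn : 0 < n)
    (θa θb θa' θb' : Fin n → ℝ) (x x' : Fin n → ℝ)
    (v : Fin (4 * n - 1) → ℝ)
    (hHankel : IsUnit (hankelOf (2 * n) (4 * n - 1) v).det)
    (hSylv : IsUnit (sylvesterMat n θa θb).det)
    (heq : HHcan n (4 * n) x θa θb v = HHcan n (4 * n) x' θa' θb' v) :
    θa = θa' ∧ θb = θb' ∧ x = x' := by
  have hs := isObserverTrajectory_stateSeq θa θb x (zeroExtend v)
  have hs' := isObserverTrajectory_stateSeq θa' θb' x' (zeroExtend v)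
  have hout : ∀ k < 4 * n, zeroExtend (stateSeq (Acan n θa) θb x (zeroExtend v) k) 0
      = zeroExtend (stateSeq (Acan n θa') θb' x' (zeroExtend v) k) 0 := fun k hk ↦ by
    simpa only [HHcan_apply] using congrFun heq ⟨k, hk⟩
  obtain ⟨ha, hb⟩ := hs.hornerPoly_eq_of_output_eq hs'
    (isPersistentlyExciting_of_isUnit_det_hankelOf hHankel)
    (isCoprime_of_isUnit_det_sylvesterMat hn.ne' hSylv) hout
  obtain rfl : θa = θa' := eq_of_hornerPoly_zeroExtend_eq ha
  obtain rfl : θb = θb' := eq_of_hornerPoly_zeroExtend_eq hb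
  refine ⟨rfl, rfl, funext fun i ↦ ?_⟩
  simpa only [stateSeq, zeroExtend_val] using
    hs.initial_eq_of_output_eq hs' (fun k hk ↦ hout k (by omega)) i.isLt
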